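/- Let γ be a real number with 0 < γ < 1, let r_l ≤ r_u be real numbers satisfying γ · r_u < r_l, and let K ≤ 0. Then for any two sequences (a_n)_{n≥0} and (b_n)_{n≥0} of real numbers all of whose terms lie in the interval [r_l, r_u], the penalized discounted return K + γ · ∑_{n=0}^{∞} γ^n a_n is strictly less than the unpenalized discounted return ∑_{n=0}^{∞} γ^n b_n. (This is the core comparison underlying the paper's lemma that, in the penalty-augmented MDP with self-loop penalty K < 0 on infeasible actions, the Q-value of any feasible action strictly exceeds that of any infeasible action whenever the per-step reward is bounded in [r_l, r_u] with r_u < r_l/γ.) -/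

import Mathlib

/-! Bounding termwise by geometric series, every discounted return of rewards in `[r_l, r_u]`
lies in `[r_l / (1 - γ), r_u / (1 - γ)]`. Hence the penalized return is at most
`γ * r_u / (1 - γ)`, which is `< r_l / (1 - γ)` by the gap hypothesis. -/

lemma summable_discounted {γ l u : ℝ} (h0 : 0 < γ) (h1 : γ < 1) {c : ℕ → ℝ}
    (hc : ∀ n, c n ∈ Set.Icc l u) : Summable fun n : ℕ => γ ^ n * c n := by
  refine Summable.of_norm_bounded
    ((summable_geometric_of_lt_one h0.le h1).mul_right (max |l| |u|)) fun n => ?_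
  rw [norm_mul, Real.norm_of_nonneg (pow_nonneg h0.le n), Real.norm_eq_abs]
  exact mul_le_mul_of_nonneg_left (abs_le_max_abs_abs (hc n).1 (hc n).2) (pow_nonneg h0.le n)

theorem penalized_return_lt_unpenalized_return
    (γ r_l r_u K : ℝ) (hγ0 : 0 < γ) (hγ1 : γ < 1)
    (hlu : r_l ≤ r_u) (hgap : γ * r_u < r_l) (hK : K ≤ 0)
    (a b : ℕ → ℝ)
    (ha : ∀ n, a n ∈ Set.Icc r_l r_u) (hb : ∀ n, b n ∈ Set.Icc r_l r_u) :
    K + γ * (∑' n : ℕ, γ ^ n * a n) < ∑' n : ℕ, γ ^ n * b n := by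
  have hgeom (r : ℝ) : HasSum (fun n : ℕ => γ ^ n * r) ((1 - γ)⁻¹ * r) :=
    (hasSum_geometric_of_lt_one hγ0.le hγ1).mul_right r
  have hA : ∑' n : ℕ, γ ^ n * a n ≤ (1 - γ)⁻¹ * r_u :=
    hasSum_le (fun n => mul_le_mul_of_nonneg_left (ha n).2 (pow_nonneg hγ0.le n))
      (summable_discounted hγ0 hγ1 ha).hasSum (hgeom r_u)
  have hB : (1 - γ)⁻¹ * r_l ≤ ∑' n : ℕ, γ ^ n * b n :=
    hasSum_le (fun n => mul_le_mul_of_nonneg_left (hb n).1 (pow_nonneg hγ0.le n))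
      (hgeom r_l) (summable_discounted hγ0 hγ1 hb).hasSum
  have hlt : (1 - γ)⁻¹ * (γ * r_u) < (1 - γ)⁻¹ * r_l :=
    mul_lt_mul_of_pos_left hgap (inv_pos.mpr (sub_pos.mpr hγ1))
  have hA' := mul_le_mul_of_nonneg_left hA hγ0.le
  linarith
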